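/- For every n ∈ ℕ there exists a constant C > 0 (depending only on n) such that for all μ with 0 < μ ≤ 1 and all ξ > 0, one has ⟨ξ⟩^{n} · | dⁿ/dξⁿ ( √(T_μ(ξ))·(1+μξ²)^{1/4} ) | ≤ C. (In other words, √(T_μ)·⟨√μ ·⟩^{1/2} belongs to the symbol class S⁰ with seminorms bounded uniformly in μ ∈ (0,1].) -/

import Mathlib

/-- The symbol `T_μ(ξ) = tanh(√μ ξ)/(√μ ξ)` for `ξ > 0`. -/
noncomputable def Tpos (μ ξ : ℝ) : ℝ := Real.tanh (Real.sqrt μ * ξ) / (Real.sqrt μ * ξ)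

/-!
All symbols `√T_μ ⟨√μ ·⟩^{1/2}` are dilations `ξ ↦ G(√μ ξ)` of the one with `μ = 1`, and dilating by
`t` multiplies the `n`-th `S⁰` seminorm by at most `max(1, t)ⁿ`, so it suffices to show `G ∈ S⁰`.
The function `G` extends smoothly to the projective line: at infinity, in the coordinate
`s = 1 / y`, `tanh (1 / |s|) = (1 - e^{-2 / |s|}) / (1 + e^{-2 / |s|})` is smooth because
`e^{-2 / |s|}` is flat at `s = 0`. Any such function is in `S⁰`, since `d/dy = -s² d/ds` makes its
`n`-th derivative `O(sⁿ)`.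
-/

open Bornology Filter Topology
open scoped ContDiff

theorem analyticAt_dslope {𝕜 E : Type*} [NontriviallyNormedField 𝕜] [NormedAddCommGroup E]
    [NormedSpace 𝕜 E] {f : 𝕜 → E} {a b : 𝕜} (ha : AnalyticAt 𝕜 f a) (hb : AnalyticAt 𝕜 f b) :
    AnalyticAt 𝕜 (dslope f a) b := by
  rcases eq_or_ne b a with rfl | hba
  · obtain ⟨p, hp⟩ := ha
    exact ⟨_, hp.has_fpower_series_dslope_fslope⟩
  · have hslope : AnalyticAt 𝕜 (slope f a) b :=
      ((analyticAt_id.sub analyticAt_const).inv (sub_ne_zero.2 hba)).smul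
        (hb.sub analyticAt_const)
    exact hslope.congr (dslope_eventuallyEq_slope_of_ne f hba).symm

theorem dslope_pos_of_strictMono {f : ℝ → ℝ} {a : ℝ} (hf : StrictMono f) (ha : 0 < deriv f a)
    (b : ℝ) : 0 < dslope f a b := by
  rcases eq_or_ne b a with rfl | hba
  · rwa [dslope_same]
  · rw [dslope_of_ne f hba]
    exact (hf.strictMonoOn Set.univ).slope_pos (Set.mem_univ a) (Set.mem_univ b) hba.symm

section SymbolZero

variable {E : Type*} [NormedAddCommGroup E]

theorem exists_norm_le_of_continuous_of_tendsto_cocompact {X : Type*} [TopologicalSpace X]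
    {f : X → E} {a : E} (hf : Continuous f) (ha : Tendsto f (cocompact X) (𝓝 a)) :
    ∃ C, ∀ x, ‖f x‖ ≤ C := by
  obtain ⟨K, hK, hKa⟩ := mem_cocompact.1 (ha.norm.eventually_lt_const (lt_add_one ‖a‖))
  obtain ⟨B, hB⟩ := hK.exists_bound_of_continuousOn hf.continuousOn
  refine ⟨max B (‖a‖ + 1), fun x => ?_⟩
  by_cases hx : x ∈ K
  · exact (hB x hx).trans (le_max_left _ _)
  · exact (hKa hx).le.trans (le_max_right _ _)

theorem sqrt_one_add_sq_mul_abs_inv {y : ℝ} (hy : y ≠ 0) :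
    √(1 + y ^ 2) * |y⁻¹| = √(1 + y⁻¹ ^ 2) := by
  rw [← Real.sqrt_sq_eq_abs, ← Real.sqrt_mul (by positivity)]
  congr 1
  field_simp
  ring

theorem sqrt_one_add_sq_mul_abs_le (t x : ℝ) :
    √(1 + x ^ 2) * |t| ≤ max 1 |t| * √(1 + (t * x) ^ 2) := by
  have one_le : 1 ≤ max 1 |t| ^ 2 := one_le_pow₀ (le_max_left _ _)
  have sq_le : t ^ 2 ≤ max 1 |t| ^ 2 := by
    rw [← sq_abs t]
    gcongr
    exact le_max_right _ _
  rw [← sq_le_sq₀ (by positivity) (by positivity), mul_pow, mul_pow, Real.sq_sqrt (by positivity),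
    Real.sq_sqrt (by positivity), sq_abs]
  calc (1 + x ^ 2) * t ^ 2 = t ^ 2 + 1 * (t * x) ^ 2 := by ring
    _ ≤ max 1 |t| ^ 2 + max 1 |t| ^ 2 * (t * x) ^ 2 := by gcongr
    _ = max 1 |t| ^ 2 * (1 + (t * x) ^ 2) := by ring

variable [NormedSpace ℝ E]

theorem exists_iteratedDeriv_comp_inv_eq {H : ℝ → E} (hH : ContDiff ℝ ∞ H) (n : ℕ) :
    ∃ K : ℝ → E, ContDiff ℝ ∞ K ∧
      ∀ y ≠ 0, iteratedDeriv n (fun y => H y⁻¹) y = y⁻¹ ^ n • K y⁻¹ := by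
  induction n with
  | zero => exact ⟨H, hH, fun y _ => by simp⟩
  | succ n ih =>
    obtain ⟨K, hK, hderiv⟩ := ih
    have : ContDiff ℝ ∞ (deriv K) := (contDiff_infty_iff_deriv.1 hK).2
    refine ⟨fun s => -((n : ℝ) • K s + s • deriv K s), by fun_prop, fun y hy => ?_⟩
    have heq : iteratedDeriv n (fun y => H y⁻¹) =ᶠ[𝓝 y] fun y => y⁻¹ ^ n • K y⁻¹ := by
      filter_upwards [isOpen_ne.mem_nhds hy] with z hz using hderiv z hz
    have hpow : HasDerivAt (fun s => s ^ n • K s)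
        (y⁻¹ ^ n • deriv K y⁻¹ + (n * y⁻¹ ^ (n - 1)) • K y⁻¹) y⁻¹ :=
      (hasDerivAt_pow n y⁻¹).smul (hK.differentiable (by simp) y⁻¹).hasDerivAt
    rw [iteratedDeriv_succ, heq.deriv_eq]
    refine (hpow.scomp y (hasDerivAt_inv hy)).deriv.trans ?_
    rcases n with _ | n
    · simp [smul_smul, pow_two]
    · simp only [Nat.add_sub_cancel]
      module

/-- The symbol class `S⁰(ℝ)`: the `n`-th derivative is `O(⟨x⟩⁻ⁿ)`, where `⟨x⟩ = √(1 + x²)`. -/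
structure IsSymbolZero (f : ℝ → E) : Prop where
  contDiff : ContDiff ℝ ∞ f
  exists_bound : ∀ n : ℕ, ∃ C, ∀ x, √(1 + x ^ 2) ^ n * ‖iteratedDeriv n f x‖ ≤ C

namespace IsSymbolZero

theorem of_eventuallyEq_comp_inv {G H : ℝ → E} (hG : ContDiff ℝ ∞ G) (hH : ContDiff ℝ ∞ H)
    (hGH : G =ᶠ[cobounded ℝ] fun y => H y⁻¹) : IsSymbolZero G where
  contDiff := hG
  exists_bound n := by
    obtain ⟨K, hK, hKH⟩ := exists_iteratedDeriv_comp_inv_eq hH n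
    obtain ⟨R, -, hR⟩ := hasBasis_cobounded_norm.eventually_iff.1 hGH
    let F : ℝ → ℝ := fun y => √(1 + y ^ 2) ^ n * ‖iteratedDeriv n G y‖
    have hF : Continuous F :=
      (by fun_prop : Continuous fun y : ℝ => √(1 + y ^ 2) ^ n).mul
        (hG.continuous_iteratedDeriv n (by exact_mod_cast le_top)).norm
    have hFK : (fun y : ℝ => √(1 + y⁻¹ ^ 2) ^ n * ‖K y⁻¹‖) =ᶠ[cobounded ℝ] F := by
      filter_upwards [tendsto_norm_cobounded_atTop.eventually_gt_atTop R,
        eventually_ne_cobounded 0] with y hRy hy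
      have heq : G =ᶠ[𝓝 y] fun y => H y⁻¹ := by
        filter_upwards [continuous_norm.continuousAt.eventually_const_lt hRy] with z hz
          using hR hz.le
      simp only [F]
      rw [heq.iteratedDeriv_eq n, hKH y hy, norm_smul, norm_pow, Real.norm_eq_abs, ← mul_assoc,
        ← mul_pow, sqrt_one_add_sq_mul_abs_inv hy]
    have hlim : Tendsto F (cobounded ℝ) (𝓝 (√(1 + 0 ^ 2) ^ n * ‖K 0‖)) :=
      Tendsto.congr' hFK <|
        ((by fun_prop : Continuous fun s : ℝ => √(1 + s ^ 2) ^ n * ‖K s‖).tendsto 0).comp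
          tendsto_inv₀_cobounded
    rw [Metric.cobounded_eq_cocompact] at hlim
    obtain ⟨C, hC⟩ := exists_norm_le_of_continuous_of_tendsto_cocompact hF hlim
    exact ⟨C, fun y => (le_abs_self _).trans (hC y)⟩

theorem exists_bound_comp_const_mul {f : ℝ → E} (hf : IsSymbolZero f) (n : ℕ) :
    ∃ C > 0, ∀ t x : ℝ,
      √(1 + x ^ 2) ^ n * ‖iteratedDeriv n (fun x => f (t * x)) x‖ ≤ C * max 1 |t| ^ n := by
  obtain ⟨C, hC⟩ := hf.exists_bound n
  refine ⟨max 1 C, by positivity, fun t x => ?_⟩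
  rw [iteratedDeriv_comp_const_smul (hf.contDiff.of_le (by exact_mod_cast le_top)), norm_smul,
    norm_pow, Real.norm_eq_abs]
  calc √(1 + x ^ 2) ^ n * (|t| ^ n * ‖iteratedDeriv n f (t * x)‖)
      = (√(1 + x ^ 2) * |t|) ^ n * ‖iteratedDeriv n f (t * x)‖ := by rw [mul_pow, mul_assoc]
    _ ≤ (max 1 |t| * √(1 + (t * x) ^ 2)) ^ n * ‖iteratedDeriv n f (t * x)‖ := by
        gcongr ?_ ^ n * _
        exact sqrt_one_add_sq_mul_abs_le t x
    _ = √(1 + (t * x) ^ 2) ^ n * ‖iteratedDeriv n f (t * x)‖ * max 1 |t| ^ n := by ring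
    _ ≤ max 1 C * max 1 |t| ^ n := by
        gcongr
        exact (hC (t * x)).trans (le_max_right _ _)

end IsSymbolZero

end SymbolZero

/-- The cardinal hyperbolic tangent `tanh y / y`, extended by `1` at `y = 0`. It is written as
`(sinh y / y) / cosh y` so that only the numerator has a removable singularity. -/
noncomputable def tanhc (y : ℝ) : ℝ := dslope Real.sinh 0 y / Real.cosh y

theorem tanhc_of_ne_zero {y : ℝ} (hy : y ≠ 0) : tanhc y = Real.tanh y / y := by
  rw [tanhc, dslope_of_ne _ hy, slope_def_field, Real.sinh_zero, sub_zero, sub_zero,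
    Real.tanh_eq_sinh_div_cosh, div_right_comm]

theorem tanhc_pos (y : ℝ) : 0 < tanhc y :=
  div_pos (dslope_pos_of_strictMono Real.sinh_strictMono (by simp) y) (Real.cosh_pos y)

theorem contDiff_tanhc : ContDiff ℝ ∞ tanhc := by
  have hsinhc : ContDiff ℝ ∞ (dslope Real.sinh 0) := contDiff_iff_contDiffAt.2 fun _ =>
    (analyticAt_dslope Real.analyticAt_sinh Real.analyticAt_sinh).contDiffAt
  exact hsinhc.div Real.contDiff_cosh fun y => (Real.cosh_pos y).ne'

/-- The function `s ↦ exp (-2 / |s|)`, extended by `0` at `s = 0`. -/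
noncomputable def expNegTwoDivAbs (s : ℝ) : ℝ := expNegInvGlue (s / 2) + expNegInvGlue (-s / 2)

theorem expNegTwoDivAbs_of_ne_zero {s : ℝ} (hs : s ≠ 0) :
    expNegTwoDivAbs s = Real.exp (-(2 / |s|)) := by
  rcases hs.lt_or_gt with hs | hs
  · rw [expNegTwoDivAbs, expNegInvGlue.zero_of_nonpos (by linarith), expNegInvGlue,
      if_neg (by linarith), zero_add, abs_of_neg hs, inv_div]
  · rw [expNegTwoDivAbs, expNegInvGlue.zero_of_nonpos (x := -s / 2) (by linarith), expNegInvGlue,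
      if_neg (by linarith), add_zero, abs_of_pos hs, inv_div]

theorem one_add_expNegTwoDivAbs_pos (s : ℝ) : 0 < 1 + expNegTwoDivAbs s :=
  add_pos_of_pos_of_nonneg one_pos
    (add_nonneg (expNegInvGlue.nonneg _) (expNegInvGlue.nonneg _))

/-- The function `s ↦ tanh (1 / |s|)`, extended by `1` at `s = 0`. -/
noncomputable def tanhAbsInv (s : ℝ) : ℝ := (1 - expNegTwoDivAbs s) / (1 + expNegTwoDivAbs s)

theorem tanh_eq_one_sub_exp_div_one_add_exp (y : ℝ) :
    Real.tanh y = (1 - Real.exp (-(2 * y))) / (1 + Real.exp (-(2 * y))) := by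
  have hexp : Real.exp (-(2 * y)) = Real.exp (-y) / Real.exp y := by
    rw [← Real.exp_sub]
    ring_nf
  rw [Real.tanh_eq, hexp]
  field_simp

theorem tanhAbsInv_of_ne_zero {s : ℝ} (hs : s ≠ 0) : tanhAbsInv s = Real.tanh |s⁻¹| := by
  rw [tanhAbsInv, expNegTwoDivAbs_of_ne_zero hs, tanh_eq_one_sub_exp_div_one_add_exp, abs_inv,
    div_eq_mul_inv 2]

theorem tanhAbsInv_pos (s : ℝ) : 0 < tanhAbsInv s := by
  rcases eq_or_ne s 0 with rfl | hs
  · simp [tanhAbsInv, expNegTwoDivAbs]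
  · rw [tanhAbsInv_of_ne_zero hs, Real.tanh_eq_sinh_div_cosh]
    exact div_pos (Real.sinh_pos_iff.2 (by positivity)) (Real.cosh_pos _)

theorem contDiff_tanhAbsInv : ContDiff ℝ ∞ tanhAbsInv := by
  have hexp : ContDiff ℝ ∞ expNegTwoDivAbs := by
    unfold expNegTwoDivAbs
    fun_prop
  exact (contDiff_const.sub hexp).div (contDiff_const.add hexp) fun s =>
    (one_add_expNegTwoDivAbs_pos s).ne'

theorem contDiff_sqrt_mul_one_add_sq_rpow {k : WithTop ℕ∞} {f : ℝ → ℝ} (hf : ContDiff ℝ k f)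
    (hf₀ : ∀ x, f x ≠ 0) (r : ℝ) : ContDiff ℝ k fun x => √(f x) * (1 + x ^ 2) ^ r :=
  (hf.sqrt hf₀).mul <| ContDiff.rpow_const_of_ne (by fun_prop) fun x => by positivity

/-- The symbol `√T_μ ⟨√μ ·⟩^{1/2}` for `μ = 1`, extended to `0` by continuity. -/
noncomputable def unitSymbol (y : ℝ) : ℝ := √(tanhc y) * (1 + y ^ 2) ^ (1 / 4 : ℝ)

theorem unitSymbol_eq_of_ne_zero {y : ℝ} (hy : y ≠ 0) :
    unitSymbol y = √(tanhAbsInv y⁻¹) * (1 + y⁻¹ ^ 2) ^ (1 / 4 : ℝ) := by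
  have htanhc : tanhc y = tanhAbsInv y⁻¹ / |y| := by
    rw [tanhc_of_ne_zero hy, tanhAbsInv_of_ne_zero (inv_ne_zero hy), inv_inv]
    rcases abs_choice y with h | h <;> simp [h]
  have hsq : 1 + y⁻¹ ^ 2 = (1 + y ^ 2) / y ^ 2 := by
    field_simp
    ring
  have hroot : (y ^ 2) ^ (1 / 4 : ℝ) = √|y| := by
    rw [Real.sqrt_eq_rpow, ← sq_abs, ← Real.rpow_natCast, ← Real.rpow_mul (abs_nonneg y)]
    norm_num
  rw [unitSymbol, htanhc, Real.sqrt_div (tanhAbsInv_pos _).le, hsq,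
    Real.div_rpow (by positivity) (by positivity), hroot, mul_div_assoc', div_mul_eq_mul_div]

theorem isSymbolZero_unitSymbol : IsSymbolZero unitSymbol :=
  .of_eventuallyEq_comp_inv
    (contDiff_sqrt_mul_one_add_sq_rpow contDiff_tanhc (fun y => (tanhc_pos y).ne') _)
    (contDiff_sqrt_mul_one_add_sq_rpow contDiff_tanhAbsInv (fun s => (tanhAbsInv_pos s).ne') _)
    ((eventually_ne_cobounded 0).mono fun _ => unitSymbol_eq_of_ne_zero)

theorem sqrt_Tpos_mul_eq_unitSymbol {μ x : ℝ} (hμ : 0 < μ) (hx : x ≠ 0) :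
    √(Tpos μ x) * (1 + μ * x ^ 2) ^ (1 / 4 : ℝ) = unitSymbol (√μ * x) := by
  rw [unitSymbol, tanhc_of_ne_zero (by positivity), mul_pow, Real.sq_sqrt hμ.le, Tpos]

theorem sqrtT_Jmu_symbol_class_general (n : ℕ) :
    ∃ C > 0, ∀ μ : ℝ, 0 < μ → ∀ ξ : ℝ, ξ ≠ 0 →
      (1 + ξ ^ 2) ^ ((n : ℝ) / 2) *
        |iteratedDeriv n (fun x => √(Tpos μ x) * (1 + μ * x ^ 2) ^ (1 / 4 : ℝ)) ξ| ≤
          C * max 1 √μ ^ n := by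
  obtain ⟨C, hC, hbound⟩ := isSymbolZero_unitSymbol.exists_bound_comp_const_mul n
  refine ⟨C, hC, fun μ hμ ξ hξ => ?_⟩
  have hdilation : (fun x => √(Tpos μ x) * (1 + μ * x ^ 2) ^ (1 / 4 : ℝ)) =ᶠ[𝓝 ξ]
      fun x => unitSymbol (√μ * x) := by
    filter_upwards [isOpen_ne.mem_nhds hξ] with x hx using sqrt_Tpos_mul_eq_unitSymbol hμ hx
  rw [hdilation.iteratedDeriv_eq n, Real.rpow_div_two_eq_sqrt _ (by positivity),
    Real.rpow_natCast, ← Real.norm_eq_abs]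
  simpa only [abs_of_nonneg (Real.sqrt_nonneg μ)] using hbound √μ ξ

theorem sqrtT_Jmu_symbol_class (n : ℕ) :
    ∃ C > 0, ∀ μ : ℝ, 0 < μ → μ ≤ 1 → ∀ ξ : ℝ, 0 < ξ →
      (1 + ξ ^ 2) ^ ((n : ℝ)/2) *
        |iteratedDeriv n
          (fun x => Real.sqrt (Tpos μ x) * (1 + μ * x ^ 2) ^ ((1:ℝ)/4)) ξ| ≤ C := by
  obtain ⟨C, hC, hbound⟩ := sqrtT_Jmu_symbol_class_general n
  exact ⟨C, hC, fun μ hμ hμ1 ξ hξ => by simpa [hμ1] using hbound μ hμ ξ hξ.ne'⟩
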